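/- For every k ≥ 3, the extended wheel graph XW_{2k} has book thickness exactly four: it admits a 4-page book embedding (its planar skeleton has the Hamiltonian cycle p, v_2, v_1, q, v_3, v_4, ..., v_{2k}, p), and as an optimal 1-planar graph its book thickness is at least four. -/

import Mathlib

open Set

/-- A `k`-page book embedding of a graph: a linear ordering of the vertices (an
injective position function) together with an assignment of every edge to one of
`k` pages such that no two edges on the same page twist; edges `{a, b}` and
`{c, d}` twist if their endpoints interleave in the linear ordering. -/
structure SimpleGraph.BookEmbedding {V : Type*} (G : SimpleGraph V) (k : ℕ) where
  pos : V → ℕ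
  pos_inj : Function.Injective pos
  page : V → V → Fin k
  page_symm : ∀ a b : V, page a b = page b a
  no_twist : ∀ a b c d : V, G.Adj a b → G.Adj c d → page a b = page c d →
    pos a < pos c → pos c < pos b → pos b < pos d → False

/-- The book thickness of a graph: the least number of pages of a book embedding. -/
noncomputable def SimpleGraph.bookThickness {V : Type*} (G : SimpleGraph V) : ℕ :=
  sInf {k | Nonempty (G.BookEmbedding k)}

/-- The extended wheel graph `XW_{2k}`: a cycle `v_1, …, v_{2k}` (here modelled on
`ZMod (2 * k)`), two poles `p` and `q` (here `Sum.inr true` and `Sum.inr false`)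
joined to every cycle vertex but not to each other, together with all edges
`{v_i, v_{i+2}}` (indices modulo `2k`). -/
def extendedWheel (k : ℕ) : SimpleGraph (ZMod (2 * k) ⊕ Bool) :=
  SimpleGraph.fromRel fun a b =>
    match a, b with
    | Sum.inl i, Sum.inl j => j = i + 1 ∨ j = i + 2
    | Sum.inl _, Sum.inr _ => True
    | _, _ => False


namespace XW

/-- positions on the spine -/
def pos (k : ℕ) : ZMod (2 * k) ⊕ Bool → ℕ
  | Sum.inl i => if i.val = 0 then 2 else if i.val = 1 then 1 else i.val + 2
  | Sum.inr b => if b then 0 else 3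

/-- page of a chord between positions `a < b` -/
def pg (k a b : ℕ) : Fin 4 :=
  if b = a + 1 then 0
  else if a = 3 ∨ (a ≤ 2 ∧ b = 2 * k + 1) then 2
  else if (a = 1 ∧ (b = 4 ∨ b = 5)) ∨ (a = 0 ∧ 5 ≤ b) then 3
  else if (a = 0 ∧ b = 4) ∨ a % 2 = 1 then 1
  else 0

/-- the chords that occur -/
def Chord (k a b : ℕ) : Prop :=
  a < b ∧ b ≤ 2 * k + 1 ∧ ((a = 0 ∧ b ≠ 3) ∨ a = 3 ∨ (a = 1 ∧ b = 3) ∨ b = a + 1 ∨ (4 ≤ a ∧ b = a + 2) ∨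
    (a = 1 ∧ (b = 4 ∨ b = 5 ∨ b = 2 * k + 1)) ∨
    (a = 2 ∧ (b = 4 ∨ b = 2 * k ∨ b = 2 * k + 1)))

lemma val_succ (k : ℕ) (hk : 3 ≤ k) (i : ZMod (2 * k)) :
    (i + 1).val = i.val + 1 ∨ (i.val + 1 = 2 * k ∧ (i + 1).val = 0) := by
  have : NeZero (2 * k) := ⟨by omega⟩
  have : Fact (1 < 2 * k) := ⟨by omega⟩
  have h := ZMod.val_add i 1
  rw [ZMod.val_one] at h
  have hi := ZMod.val_lt i
  by_cases h2 : i.val + 1 = 2 * k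
  · right; rw [h2, Nat.mod_self] at h; exact ⟨h2, h⟩
  · left; rw [Nat.mod_eq_of_lt (by omega)] at h; exact h

lemma pos_inj (k : ℕ) (hk : 3 ≤ k) : Function.Injective (pos k) := by
  have : NeZero (2 * k) := ⟨by omega⟩
  rintro (i | b) (j | c) h
  · congr 1
    apply ZMod.val_injective
    simp only [pos] at h
    split_ifs at h <;> omega
  · simp only [pos] at h
    split_ifs at h <;> omega
  · simp only [pos] at h
    split_ifs at h <;> omega
  · cases b <;> cases c <;> simp [pos] at h ⊢

lemma rel_chord (k : ℕ) (hk : 3 ≤ k) (i j : ZMod (2 * k)) (h : j = i + 1 ∨ j = i + 2) :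
    Chord k (pos k (Sum.inl i)) (pos k (Sum.inl j)) ∨
    Chord k (pos k (Sum.inl j)) (pos k (Sum.inl i)) := by
  have : NeZero (2 * k) := ⟨by omega⟩
  have hi := ZMod.val_lt i
  have hj := ZMod.val_lt j
  have h1 := val_succ k hk i
  have h2 := val_succ k hk (i + 1)
  have e : i + 1 + 1 = i + 2 := by ring
  rw [e] at h2
  simp only [pos, Chord]
  rcases h with rfl | rfl
  · clear h2 e
    rcases h1 with h1 | ⟨h0, h1⟩ <;> rw [h1] <;> split_ifs <;> first | omega | grind
  · rcases h1 with h1 | ⟨h0, h1⟩ <;> rw [h1] at h2 <;> rcases h2 with h2 | ⟨h3, h2⟩ <;> rw [h2] at hj ⊢ <;>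
      clear h1 h2 e <;> split_ifs <;> first | omega | grind

lemma pole_chord (k : ℕ) (hk : 3 ≤ k) (i : ZMod (2 * k)) (b : Bool) :
    Chord k (pos k (Sum.inl i)) (pos k (Sum.inr b)) ∨
    Chord k (pos k (Sum.inr b)) (pos k (Sum.inl i)) := by
  have : NeZero (2 * k) := ⟨by omega⟩
  have hi := ZMod.val_lt i
  simp only [pos, Chord]
  split_ifs <;> omega

lemma adj_chord (k : ℕ) (hk : 3 ≤ k) (a b : ZMod (2 * k) ⊕ Bool) (h : (extendedWheel k).Adj a b)
    (hlt : pos k a < pos k b) : Chord k (pos k a) (pos k b) := by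
  have key : Chord k (pos k a) (pos k b) ∨ Chord k (pos k b) (pos k a) := by
    rw [extendedWheel, SimpleGraph.fromRel_adj] at h
    obtain ⟨-, h⟩ := h
    rcases a with i | b' <;> rcases b with j | c
    · rcases h with h | h
      · exact rel_chord k hk i j h
      · exact (rel_chord k hk j i h).symm
    · exact pole_chord k hk i c
    · exact (pole_chord k hk j b').symm
    · simp at h
  rcases key with h | h
  · exact h
  · have := h.1
    omega

lemma pg_no_twist (k : ℕ) (hk : 3 ≤ k) (a b c d : ℕ) (h1 : Chord k a b) (h2 : Chord k c d)
    (h : pg k a b = pg k c d) (hac : a < c) (hcb : c < b) (hbd : b < d) : False := by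
  obtain ⟨-, hb, h1⟩ := h1
  obtain ⟨-, hd, h2⟩ := h2
  unfold pg at h
  split_ifs at h <;> omega

def emb (k : ℕ) (hk : 3 ≤ k) : (extendedWheel k).BookEmbedding 4 where
  pos := pos k
  pos_inj := pos_inj k hk
  page a b := pg k (min (pos k a) (pos k b)) (max (pos k a) (pos k b))
  page_symm a b := by rw [min_comm, max_comm]
  no_twist a b c d hab hcd h h1 h2 h3 := by
    rw [min_eq_left (by omega), max_eq_right (by omega), min_eq_left (by omega),
      max_eq_right (by omega)] at h
    exact pg_no_twist k hk _ _ _ _ (adj_chord k hk a b hab (by omega))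
      (adj_chord k hk c d hcd (by omega)) h h1 h2 h3

/-- noncrossing families of long chords are small -/
lemma noncross (m : ℕ) : ∀ (l : ℕ) (S : Finset (ℕ × ℕ)),
    (∀ e ∈ S, l ≤ e.1 ∧ e.1 + 2 ≤ e.2 ∧ e.2 ≤ l + m + 1) →
    (∀ e ∈ S, ∀ f ∈ S, e.1 < f.1 → f.1 < e.2 → e.2 < f.2 → False) → S.card ≤ m := by
  induction m using Nat.strong_induction_on with
  | _ m ih =>
  intro l S hS hx
  rcases Nat.eq_zero_or_pos m with rfl | hm
  · rw [Nat.le_zero, Finset.card_eq_zero, Finset.eq_empty_iff_forall_notMem]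
    intro e he
    have := hS e he
    omega
  · obtain ⟨t, ht1, ht2, ht⟩ : ∃ t, l < t ∧ t < l + m + 1 ∧
        ∀ e ∈ S, e ≠ (l, l + m + 1) → e.2 ≤ t ∨ t ≤ e.1 := by
      by_cases hne : (S.filter fun e => e.1 = l ∧ e.2 < l + m + 1).Nonempty
      · obtain ⟨f, hf, hmax⟩ := Finset.exists_max_image _ (fun e => e.2) hne
        rw [Finset.mem_filter] at hf
        obtain ⟨hfS, hf1, hf2⟩ := hf
        have := hS f hfS
        refine ⟨f.2, by omega, hf2, ?_⟩
        intro e he hne'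
        by_contra hcon
        push Not at hcon
        have h2 := hS e he
        by_cases h3 : e.1 = l
        · have h4 : e.2 ≠ l + m + 1 := fun h4 => hne' (Prod.ext h3 h4)
          have := hmax e (Finset.mem_filter.2 ⟨he, h3, by omega⟩)
          omega
        · exact hx f hfS e he (by omega) (by omega) (by omega)
      · refine ⟨l + 1, by omega, by omega, ?_⟩
        intro e he hne'
        have h2 := hS e he
        by_cases h3 : e.1 = l
        · exfalso
          have h4 : e.2 ≠ l + m + 1 := fun h4 => hne' (Prod.ext h3 h4)
          exact hne ⟨e, Finset.mem_filter.2 ⟨he, h3, by omega⟩⟩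
        · right; omega
    have c1 : (S.filter fun e => e.2 ≤ t).card ≤ t - l - 1 := by
      apply ih (t - l - 1) (by omega) l
      · intro e he
        rw [Finset.mem_filter] at he
        have := hS e he.1
        omega
      · intro e he f hf
        exact hx e (Finset.mem_filter.1 he).1 f (Finset.mem_filter.1 hf).1
    have c2 : (S.filter fun e => t ≤ e.1).card ≤ l + m - t := by
      apply ih (l + m - t) (by omega) t
      · intro e he
        rw [Finset.mem_filter] at he
        have := hS e he.1
        omega
      · intro e he f hf
        exact hx e (Finset.mem_filter.1 he).1 f (Finset.mem_filter.1 hf).1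
    have hsub : S ⊆ insert (l, l + m + 1)
        ((S.filter fun e => e.2 ≤ t) ∪ (S.filter fun e => t ≤ e.1)) := by
      intro e he
      by_cases h : e = (l, l + m + 1)
      · simp [h]
      · rw [Finset.mem_insert, Finset.mem_union, Finset.mem_filter, Finset.mem_filter]
        rcases ht e he h with h | h
        · exact Or.inr (Or.inl ⟨he, h⟩)
        · exact Or.inr (Or.inr ⟨he, h⟩)
    have h1 := Finset.card_le_card hsub
    have h2 := Finset.card_insert_le (l, l + m + 1)
        ((S.filter fun e => e.2 ≤ t) ∪ (S.filter fun e => t ≤ e.1))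
    have h3 := Finset.card_union_le (S.filter fun e => e.2 ≤ t) (S.filter fun e => t ≤ e.1)
    omega

/-- the general counting bound, for chords on positions `0, …, N + 2` -/
lemma chord_count (N m : ℕ) (E : Finset (ℕ × ℕ)) (page : ℕ × ℕ → Fin m)
    (hE : ∀ e ∈ E, e.1 < e.2 ∧ e.2 ≤ N + 2)
    (hx : ∀ e ∈ E, ∀ f ∈ E, page e = page f → e.1 < f.1 → f.1 < e.2 → e.2 < f.2 → False) :
    E.card ≤ N + 3 + m * N := by
  classical
  set L := E.filter (fun e => e.1 + 2 ≤ e.2 ∧ e ≠ (0, N + 2)) with hL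
  have hLc : L.card ≤ m * N := by
    have := Finset.card_le_mul_card_image_of_maps_to (s := L) (t := Finset.univ) (f := page)
      (fun _ _ => Finset.mem_univ _) N (by
        intro p _
        have hn : ((0, N + 2) : ℕ × ℕ) ∉ L.filter (fun e => page e = p) := by
          simp [hL]
        have h := noncross (N + 1) 0 (insert (0, N + 2) (L.filter (fun e => page e = p))) (by
          intro e he
          rw [Finset.mem_insert] at he
          rcases he with rfl | he
          · simp
          · simp only [hL, Finset.mem_filter] at he
            have := hE e he.1.1
            omega) (by
          intro e he f hf
          rw [Finset.mem_insert] at he hf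
          intro h1 h2 h3
          rcases he with rfl | he
          · rcases hf with rfl | hf
            · simp at h1
            · simp only [hL, Finset.mem_filter] at hf
              have := hE f hf.1.1
              simp only at h3
              omega
          · rcases hf with rfl | hf
            · simp at h1
            · simp only [hL, Finset.mem_filter] at hf he
              exact hx e he.1.1 f hf.1.1 (he.2.trans hf.2.symm) h1 h2 h3)
        rw [Finset.card_insert_of_notMem hn] at h
        omega)
    simpa [mul_comm] using this
  have hsub : E ⊆ L ∪ insert (0, N + 2) ((Finset.range (N + 2)).image fun a => (a, a + 1)) := by
    intro e he
    have h := hE e he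
    rw [Finset.mem_union, Finset.mem_insert, hL, Finset.mem_filter, Finset.mem_image]
    by_cases h0 : e = (0, N + 2)
    · exact Or.inr (Or.inl h0)
    · by_cases h1 : e.1 + 2 ≤ e.2
      · exact Or.inl ⟨he, h1, h0⟩
      · refine Or.inr (Or.inr ⟨e.1, Finset.mem_range.2 (by omega), ?_⟩)
        exact Prod.ext rfl (by simp only; omega)
  have h1 := Finset.card_le_card hsub
  have h2 := Finset.card_union_le L
    (insert (0, N + 2) ((Finset.range (N + 2)).image fun a => (a, a + 1)))
  have h3 := Finset.card_insert_le ((0, N + 2) : ℕ × ℕ)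
    ((Finset.range (N + 2)).image fun a => (a, a + 1))
  have h4 := Finset.card_image_le (s := Finset.range (N + 2)) (f := fun a => (a, a + 1))
  rw [Finset.card_range] at h4
  omega

/-- enumeration of the edges -/
def edge (k : ℕ) : Fin 4 × ZMod (2 * k) → (ZMod (2 * k) ⊕ Bool) × (ZMod (2 * k) ⊕ Bool)
  | (0, i) => (Sum.inl i, Sum.inl (i + 1))
  | (1, i) => (Sum.inl i, Sum.inl (i + 2))
  | (2, i) => (Sum.inl i, Sum.inr true)
  | (3, i) => (Sum.inl i, Sum.inr false)

lemma small_ne (k : ℕ) (hk : 3 ≤ k) (c : ℕ) (h0 : 0 < c) (h5 : c < 6) : (c : ZMod (2 * k)) ≠ 0 := by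
  intro h
  rw [ZMod.natCast_eq_zero_iff] at h
  have := Nat.le_of_dvd h0 h
  omega

lemma edge_adj (k : ℕ) (hk : 3 ≤ k) (x : Fin 4 × ZMod (2 * k)) :
    (extendedWheel k).Adj (edge k x).1 (edge k x).2 := by
  have h1 := small_ne k hk 1 (by omega) (by omega)
  have h2 := small_ne k hk 2 (by omega) (by omega)
  push_cast at h1 h2
  obtain ⟨c, i⟩ := x
  rw [extendedWheel, SimpleGraph.fromRel_adj]
  fin_cases c <;> simp [edge, h1, h2]

lemma edge_inj (k : ℕ) (hk : 3 ≤ k) (x y : Fin 4 × ZMod (2 * k))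
    (h : edge k x = edge k y ∨ edge k x = (edge k y).swap) : x = y := by
  have h1 := small_ne k hk 1 (by omega) (by omega)
  have h2 := small_ne k hk 2 (by omega) (by omega)
  have h3 := small_ne k hk 3 (by omega) (by omega)
  have h4 := small_ne k hk 4 (by omega) (by omega)
  push_cast at h1 h2 h3 h4
  obtain ⟨c, i⟩ := x
  obtain ⟨d, j⟩ := y
  fin_cases c <;> fin_cases d <;> simp [edge] at h ⊢ <;> grind

lemma lower (k : ℕ) (hk : 3 ≤ k) (m : ℕ) (B : (extendedWheel k).BookEmbedding m) : 4 ≤ m := by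
  classical
  have : NeZero (2 * k) := ⟨by omega⟩
  let V := ZMod (2 * k) ⊕ Bool
  have hV : Fintype.card (ZMod (2 * k) ⊕ Bool) = 2 * k + 2 := by
    simp [ZMod.card]
  let r : ZMod (2 * k) ⊕ Bool → ℕ := fun v => (Finset.univ.filter fun u => B.pos u < B.pos v).card
  have hmono : ∀ u v, B.pos u < B.pos v → r u < r v := by
    intro u v h
    apply Finset.card_lt_card
    rw [Finset.ssubset_iff_of_subset]
    · exact ⟨u, by simp [h], by simp⟩
    · intro w hw
      simp only [Finset.mem_filter, Finset.mem_univ, true_and] at hw ⊢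
      omega
  have hiff : ∀ u v, r u < r v → B.pos u < B.pos v := by
    intro u v h
    by_contra hcon
    rcases Nat.lt_or_eq_of_le (Nat.le_of_not_lt hcon) with h2 | h2
    · have := hmono _ _ h2
      omega
    · have := B.pos_inj h2
      subst this
      omega
  have rinj : Function.Injective r := by
    intro u v h
    apply B.pos_inj
    rcases Nat.lt_trichotomy (B.pos u) (B.pos v) with h2 | h2 | h2
    · have := hmono _ _ h2
      omega
    · exact h2
    · have := hmono _ _ h2
      omega
  have hr : ∀ v, r v < 2 * k + 2 := by
    intro v
    rw [← hV]
    apply Finset.card_lt_univ_of_notMem (x := v)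
    simp
  let ch : Fin 4 × ZMod (2 * k) → ℕ × ℕ := fun x =>
    (min (r (edge k x).1) (r (edge k x).2), max (r (edge k x).1) (r (edge k x).2))
  have chinj : Function.Injective ch := by
    intro x y h
    apply edge_inj k hk
    simp only [ch, Prod.mk.injEq] at h
    have : (r (edge k x).1 = r (edge k y).1 ∧ r (edge k x).2 = r (edge k y).2) ∨
        (r (edge k x).1 = r (edge k y).2 ∧ r (edge k x).2 = r (edge k y).1) := by omega
    rcases this with h | h
    · exact Or.inl (Prod.ext (rinj h.1) (rinj h.2))
    · exact Or.inr (Prod.ext (rinj h.1) (rinj h.2))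
  let inv : ℕ → ZMod (2 * k) ⊕ Bool := Function.invFun r
  have hinv : ∀ v, inv (r v) = v := Function.leftInverse_invFun rinj
  have hform : ∀ x, ∃ a b, ch x = (r a, r b) ∧ r a < r b ∧ (extendedWheel k).Adj a b := by
    intro x
    have ha := edge_adj k hk x
    rcases Nat.lt_trichotomy (r (edge k x).1) (r (edge k x).2) with h | h | h
    · exact ⟨_, _, by simp only [ch]; rw [min_eq_left h.le, max_eq_right h.le], h, ha⟩
    · exact absurd (rinj h) ha.ne
    · exact ⟨_, _, by simp only [ch]; rw [min_eq_right h.le, max_eq_left h.le], h, ha.symm⟩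
  have hcount := chord_count (2 * k - 1) m (Finset.univ.image ch)
    (fun e => B.page (inv e.1) (inv e.2)) (by
      intro e he
      obtain ⟨x, -, rfl⟩ := Finset.mem_image.1 he
      obtain ⟨a, b, h, hab, -⟩ := hform x
      rw [h]
      have := hr b
      exact ⟨hab, by simp only; omega⟩) (by
      intro e he f hf hp h1 h2 h3
      obtain ⟨x, -, rfl⟩ := Finset.mem_image.1 he
      obtain ⟨y, -, rfl⟩ := Finset.mem_image.1 hf
      obtain ⟨a, b, h, hab, hA⟩ := hform x
      obtain ⟨c, d, h', hcd, hC⟩ := hform y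
      rw [h] at hp h1 h2 h3
      rw [h'] at hp h1 h2 h3
      simp only [hinv] at hp h1 h2 h3
      exact B.no_twist a b c d hA hC hp (hiff _ _ h1) (hiff _ _ h2) (hiff _ _ h3))
  rw [Finset.card_image_of_injective _ chinj, Finset.card_univ, Fintype.card_prod, Fintype.card_fin,
    ZMod.card] at hcount
  by_contra hm
  have : m * (2 * k - 1) ≤ 3 * (2 * k - 1) := Nat.mul_le_mul_right _ (by omega)
  omega

end XW

/-- **For every `k ≥ 3`, the extended wheel graph `XW_{2k}` has book thickness exactly
four**: it admits a 4-page book embedding, and (being an optimal 1-planar graph) its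
book thickness is at least four. -/
theorem extendedWheel_bookThickness_eq_four (k : ℕ) (hk : 3 ≤ k) :
    Nonempty ((extendedWheel k).BookEmbedding 4) ∧
      (extendedWheel k).bookThickness = 4 := by
  refine ⟨⟨XW.emb k hk⟩, le_antisymm (Nat.sInf_le ⟨XW.emb k hk⟩) ?_⟩
  refine le_csInf (s := {m | Nonempty ((extendedWheel k).BookEmbedding m)}) ⟨4, ⟨XW.emb k hk⟩⟩ ?_
  rintro m ⟨B⟩
  exact XW.lower k hk m B
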